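/- Suppose p* ∈ ℝⁿ satisfies F(p*) = p*. Then F is differentiable at p*, every complex eigenvalue of the Jacobian matrix ∇F(p*) is real and lies in the interval (−1, 1], and 1 is a simple eigenvalue of ∇F(p*) (with eigenvector the all-ones vector). -/

import Mathlib

open BigOperators Matrix

/-- `σ(p) = Σ_{i,j} A_{ij} e^{p_i − p_j}`. -/
noncomputable def sigmaFun {n : ℕ} (A : Matrix (Fin n) (Fin n) ℝ) (p : Fin n → ℝ) : ℝ :=
  ∑ i, ∑ j, A i j * Real.exp (p i - p j)

/-- The reduced effective HOTS fixed-point map `F`, with `γ = (1−α)/(2α−1)`. -/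
noncomputable def effHotsMap {n : ℕ} (A : Matrix (Fin n) (Fin n) ℝ) (α : ℝ)
    (p : Fin n → ℝ) : Fin n → ℝ :=
  fun k =>
    (1 / 2) * Real.log ((∑ i, A i k * Real.exp (p i))
      + (1 - α) / (2 * α - 1) * sigmaFun A p / ∑ j, Real.exp (-(p j)))
    - (1 / 2) * Real.log ((∑ j, A k j * Real.exp (-(p j)))
      + (1 - α) / (2 * α - 1) * sigmaFun A p / ∑ i, Real.exp (p i))

/-!
Write `M i j = A i j * exp (p i - p j)` for the flow at the fixed point `p`, `σ` for its total, and
`x`, `y` for the Gibbs distributions of `p` and `-p`. The fixed-point equation says that the flow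
leaving each node, increased by `γ σ x`, equals the flow entering it, increased by `γ σ y`; call
the common value `d`. Eliminating the flow imbalance with this equation, the Jacobian becomes
`D⁻¹ S` with `D = diag d` and the symmetric matrix
`S = ½ (M + Mᵀ + γ² σ (y - x)(y - x)ᵀ + γ σ (x xᵀ + y yᵀ))`.

Hence the eigenvalues are real, the root `1` of the characteristic polynomial is as multiple as
`ker (D - S)` is large, and everything follows from the forms `D ± S`. The form of `D + S` is
positive, being a sum of squares. In the form of `D - S` the only negative term,
`- γ² σ ((y - x) ⬝ h)²`, is absorbed by `∑ M i j (h i - h j)²`: the balance equation turns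
`γ σ (y - x) ⬝ h` into `∑ M i j (h i - h j)`, to which Cauchy–Schwarz applies. What is left is at
least `γ σ` times the sum of the variances of `h` under `x` and `y`, divided by two, which vanishes
only for constant `h`.
-/

section WeightedHermitian

open scoped ComplexOrder

variable {ι 𝕜 : Type*} [Fintype ι] [RCLike 𝕜] {D J : Matrix ι ι 𝕜}

theorem dotProduct_mul_mulVec_of_mulVec_eq_smul {μ : 𝕜} {w : ι → 𝕜} (hw : J *ᵥ w = μ • w) :
    star w ⬝ᵥ (D * J) *ᵥ w = μ * (star w ⬝ᵥ D *ᵥ w) := by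
  rw [← mulVec_mulVec, hw, mulVec_smul, dotProduct_smul, smul_eq_mul]

theorem mulVec_eq_zero_of_mulVec_mulVec_eq_zero (hD : D.PosDef) (hDJ : (D * J).IsHermitian)
    {w : ι → 𝕜} (hw : J *ᵥ J *ᵥ w = 0) : J *ᵥ w = 0 := by
  by_contra hne
  refine (hD.dotProduct_mulVec_pos hne).ne' ?_
  calc star (J *ᵥ w) ⬝ᵥ D *ᵥ J *ᵥ w = star w ⬝ᵥ (D * J)ᴴ *ᵥ J *ᵥ w := by
        rw [star_mulVec, ← dotProduct_mulVec, mulVec_mulVec, conjTranspose_mul, hD.isHermitian.eq]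
    _ = 0 := by rw [hDJ.eq, ← mulVec_mulVec, hw, mulVec_zero, dotProduct_zero]

variable [DecidableEq ι]

theorem exists_ne_zero_mulVec_eq_smul_of_mem_spectrum {K : Type*} [Field K]
    {J : Matrix ι ι K} {μ : K} (hμ : μ ∈ spectrum K J) : ∃ w ≠ 0, J *ᵥ w = μ • w := by
  rw [← spectrum_toLin', ← Module.End.hasEigenvalue_iff_mem_spectrum] at hμ
  obtain ⟨w, hw⟩ := hμ.exists_hasEigenvector
  exact ⟨w, hw.2, hw.apply_eq_smul⟩

theorem le_one_of_mem_spectrum (hD : D.PosDef) (hsub : (D - D * J).PosSemidef) {μ : 𝕜}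
    (hμ : μ ∈ spectrum 𝕜 J) : μ ≤ 1 := by
  obtain ⟨w, hw₀, hw⟩ := exists_ne_zero_mulVec_eq_smul_of_mem_spectrum hμ
  have h := hsub.dotProduct_mulVec_nonneg w
  rw [sub_mulVec, dotProduct_sub, dotProduct_mul_mulVec_of_mulVec_eq_smul hw, sub_nonneg] at h
  exact (mul_le_iff_le_one_left (hD.dotProduct_mulVec_pos hw₀)).1 h

theorem neg_one_lt_of_mem_spectrum (hD : D.PosDef) (hadd : (D + D * J).PosDef) {μ : 𝕜}
    (hμ : μ ∈ spectrum 𝕜 J) : -1 < μ := by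
  obtain ⟨w, hw₀, hw⟩ := exists_ne_zero_mulVec_eq_smul_of_mem_spectrum hμ
  have h := hadd.dotProduct_mulVec_pos hw₀
  rw [add_mulVec, dotProduct_add, dotProduct_mul_mulVec_of_mulVec_eq_smul hw, ← one_add_mul] at h
  exact neg_lt_iff_pos_add'.2 ((mul_pos_iff_of_pos_right (hD.dotProduct_mulVec_pos hw₀)).1 h)

theorem maxGenEigenspace_toLin'_eq_eigenspace (hD : D.PosDef) (hDJ : (D * J).IsHermitian) {μ : 𝕜}
    (hμ : IsSelfAdjoint μ) :
    Module.End.maxGenEigenspace (toLin' J) μ = Module.End.eigenspace (toLin' J) μ := by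
  set N : Matrix ι ι 𝕜 := J - μ • 1
  have hN : toLin' J - μ • (1 : Module.End 𝕜 (ι → 𝕜)) = toLin' N := by
    simp [N, Module.End.one_eq_id]
  have hDN : (D * N).IsHermitian := by
    simpa [N, mul_sub] using hDJ.sub (hD.isHermitian.smul hμ)
  have hker : LinearMap.ker (toLin' N ^ 1) = LinearMap.ker (toLin' N ^ 2) := by
    ext w
    simp only [LinearMap.mem_ker, pow_one, pow_two, Module.End.mul_apply, toLin'_apply]
    exact ⟨fun hw => by rw [hw, mulVec_zero], mulVec_eq_zero_of_mulVec_mulVec_eq_zero hD hDN⟩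
  refine le_antisymm (fun w hw => ?_) Module.End.eigenspace_le_maxGenEigenspace
  obtain ⟨k, hk⟩ := (Module.End.mem_maxGenEigenspace _ _ _).1 hw
  rw [hN] at hk
  rw [Module.End.eigenspace_def, hN, ← pow_one (toLin' N), Module.End.ker_pow_constant hker k,
    LinearMap.mem_ker, pow_add, Module.End.mul_apply, hk, map_zero]

theorem rootMultiplicity_charpoly_eq_finrank_eigenspace (hD : D.PosDef)
    (hDJ : (D * J).IsHermitian) {μ : 𝕜} (hμ : IsSelfAdjoint μ) :
    J.charpoly.rootMultiplicity μ = Module.finrank 𝕜 (Module.End.eigenspace (toLin' J) μ) := by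
  rw [← charpoly_toLin', ← LinearMap.finrank_maxGenEigenspace_eq,
    maxGenEigenspace_toLin'_eq_eigenspace hD hDJ hμ]

theorem rootMultiplicity_one_charpoly_eq_one (hD : D.PosDef) (hDJ : (D * J).IsHermitian)
    {v : ι → 𝕜} (hv₀ : v ≠ 0) (hv : J *ᵥ v = v) (huniq : ∀ w, J *ᵥ w = w → ∃ c : 𝕜, c • v = w) :
    J.charpoly.rootMultiplicity 1 = 1 := by
  rw [rootMultiplicity_charpoly_eq_finrank_eigenspace hD hDJ (.one 𝕜)]
  have hmem : v ∈ Module.End.eigenspace (toLin' J) 1 := by simpa using hv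
  refine (finrank_eq_one_iff_of_nonzero' ⟨v, hmem⟩ (by simpa using hv₀)).2 fun ⟨w, hw⟩ => ?_
  obtain ⟨c, hc⟩ := huniq w (by simpa using hw)
  exact ⟨c, Subtype.ext hc⟩

end WeightedHermitian

section Complexification

open scoped ComplexOrder MatrixOrder

variable {ι : Type*} {S : Matrix ι ι ℝ}

theorem posSemidef_map_ofReal [Finite ι] (hS : S.PosSemidef) :
    (S.map Complex.ofReal).PosSemidef := by
  classical
  cases nonempty_fintype ι
  obtain ⟨B, rfl⟩ := CStarAlgebra.nonneg_iff_eq_star_mul_self.1 hS.nonneg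
  have hmap : (star B * B).map Complex.ofReal
      = (B.map Complex.ofReal)ᴴ * B.map Complex.ofReal := by
    ext i j
    simp [mul_apply, star_eq_conjTranspose]
  rw [hmap]
  exact posSemidef_conjTranspose_mul_self _

theorem posDef_map_ofReal [Finite ι] (hS : S.PosDef) : (S.map Complex.ofReal).PosDef := by
  classical
  cases nonempty_fintype ι
  exact (posSemidef_map_ofReal hS.posSemidef).posDef_iff_isUnit.2
    (hS.isUnit.map Complex.ofRealHom.mapMatrix)

variable [Fintype ι] [DecidableEq ι]

theorem rootMultiplicity_charpoly_map_ofReal (μ : ℝ) :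
    (S.map Complex.ofReal).charpoly.rootMultiplicity (μ : ℂ) = S.charpoly.rootMultiplicity μ := by
  rw [Polynomial.eq_rootMultiplicity_map Complex.ofRealHom.injective, ← charpoly_map]
  rfl

theorem im_eq_zero_and_re_mem_of_mem_spectrum {D J : Matrix ι ι ℝ} (hD : D.PosDef)
    (hsub : (D - D * J).PosSemidef) (hadd : (D + D * J).PosDef) {μ : ℂ}
    (hμ : μ ∈ spectrum ℂ (J.map Complex.ofReal)) : μ.im = 0 ∧ -1 < μ.re ∧ μ.re ≤ 1 := by
  have hmul : (D * J).map Complex.ofReal = D.map Complex.ofReal * J.map Complex.ofReal :=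
    Matrix.map_mul (f := Complex.ofRealHom)
  have hle : μ ≤ 1 := by
    refine le_one_of_mem_spectrum (posDef_map_ofReal hD) ?_ hμ
    rw [← hmul, ← Matrix.map_sub _ Complex.ofReal_sub]
    exact posSemidef_map_ofReal hsub
  have hlt : -1 < μ := by
    refine neg_one_lt_of_mem_spectrum (posDef_map_ofReal hD) ?_ hμ
    rw [← hmul, ← Matrix.map_add _ Complex.ofReal_add]
    exact posDef_map_ofReal hadd
  exact ⟨(Complex.le_def.1 hle).2, (Complex.lt_def.1 hlt).1, (Complex.le_def.1 hle).1⟩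

end Complexification

section Traffic

variable {ι : Type*} [Fintype ι] {γ : ℝ} {M : Matrix ι ι ℝ} {x y : ι → ℝ}

/-- The sum of all entries of `M`, thought of as flow along the arcs `i → j`. -/
def totalFlow (M : Matrix ι ι ℝ) : ℝ := ∑ i, ∑ j, M i j

/-- The flow leaving each node, plus the share `x k` of the exchange `γ * totalFlow M` with an
exterior node. The traffic entering each node is the traffic of the transposed flow. -/
noncomputable def traffic (γ : ℝ) (M : Matrix ι ι ℝ) (x : ι → ℝ) : ι → ℝ :=
  fun k => ∑ j, M k j + γ * totalFlow M * x k

/-- The symmetric matrix `S` such that the HOTS map has Jacobian `D⁻¹ * S` at a fixed point, where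
`D` is the diagonal matrix of traffics. -/
noncomputable def scaledJacobian (γ : ℝ) (M : Matrix ι ι ℝ) (x y : ι → ℝ) : Matrix ι ι ℝ :=
  (1 / 2 : ℝ) • (M + Mᵀ + (γ ^ 2 * totalFlow M) • vecMulVec (y - x) (y - x)
    + (γ * totalFlow M) • (vecMulVec x x + vecMulVec y y))

theorem totalFlow_transpose (M : Matrix ι ι ℝ) : totalFlow Mᵀ = totalFlow M :=
  Finset.sum_comm

theorem traffic_pos (hM : ∀ i j, 0 ≤ M i j) (hγ : 0 < γ) (hσ : 0 < totalFlow M)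
    (hx : ∀ i, 0 < x i) (k : ι) : 0 < traffic γ M x k :=
  add_pos_of_nonneg_of_pos (Finset.sum_nonneg fun j _ => hM k j) (mul_pos (mul_pos hγ hσ) (hx k))

theorem isHermitian_scaledJacobian : (scaledJacobian γ M x y).IsHermitian := by
  rw [IsHermitian, conjTranspose_eq_transpose_of_trivial]
  simp only [scaledJacobian, transpose_smul, transpose_add, transpose_transpose,
    transpose_vecMulVec, add_comm Mᵀ M]

theorem scaledJacobian_mulVec (h : ι → ℝ) :
    scaledJacobian γ M x y *ᵥ h
      = (1 / 2 : ℝ) • (M *ᵥ h + Mᵀ *ᵥ h + (γ ^ 2 * totalFlow M * ((y - x) ⬝ᵥ h)) • (y - x)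
        + (γ * totalFlow M) • ((x ⬝ᵥ h) • x + (y ⬝ᵥ h) • y)) := by
  simp only [scaledJacobian, smul_mulVec, add_mulVec, vecMulVec_mulVec, op_smul_eq_smul, smul_smul]

theorem sum_mul_sub_mean_sq (z h : ι → ℝ) (hz : ∑ k, z k = 1) :
    ∑ k, z k * (h k - z ⬝ᵥ h) ^ 2 = ∑ k, z k * h k ^ 2 - (z ⬝ᵥ h) ^ 2 := by
  calc ∑ k, z k * (h k - z ⬝ᵥ h) ^ 2
      = ∑ k, z k * h k ^ 2 - 2 * (z ⬝ᵥ h) * (z ⬝ᵥ h) + (z ⬝ᵥ h) ^ 2 * ∑ k, z k := by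
        nth_rw 3 [dotProduct]
        simp only [Finset.mul_sum, ← Finset.sum_add_distrib, ← Finset.sum_sub_distrib]
        exact Finset.sum_congr rfl fun k _ => by ring
    _ = ∑ k, z k * h k ^ 2 - (z ⬝ᵥ h) ^ 2 := by rw [hz]; ring

theorem sum_flow_eq_dotProduct (M : Matrix ι ι ℝ) (h : ι → ℝ) :
    ∑ i, ∑ j, M i j * (h i - h j) = (M *ᵥ 1 - Mᵀ *ᵥ 1) ⬝ᵥ h := by
  calc ∑ i, ∑ j, M i j * (h i - h j)
      = ∑ i, ∑ j, M i j * h i - ∑ j, ∑ i, M i j * h j := by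
        rw [Finset.sum_comm (f := fun j i => M i j * h j)]
        simp only [mul_sub, Finset.sum_sub_distrib]
    _ = (M *ᵥ 1 - Mᵀ *ᵥ 1) ⬝ᵥ h := by
        simp only [dotProduct, mulVec, Pi.sub_apply, Pi.one_apply, transpose_apply, mul_one,
          sub_mul, Finset.sum_mul, Finset.sum_sub_distrib]

theorem mulVec_one_sub_transpose_mulVec_one (hbal : traffic γ M x = traffic γ Mᵀ y) :
    M *ᵥ 1 - Mᵀ *ᵥ 1 = (γ * totalFlow M) • (y - x) := by
  funext k
  have hk := congrFun hbal k
  simp only [traffic, totalFlow_transpose, transpose_apply] at hk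
  simp only [Pi.sub_apply, Pi.smul_apply, mulVec, dotProduct_one, transpose_apply, smul_eq_mul]
  linarith

theorem sq_sum_flow_le (hM : ∀ i j, 0 ≤ M i j) (h : ι → ℝ) :
    (∑ i, ∑ j, M i j * (h i - h j)) ^ 2
      ≤ totalFlow M * ∑ i, ∑ j, M i j * (h i - h j) ^ 2 := by
  rw [totalFlow, ← Fintype.sum_prod_type' M]
  simp only [← Fintype.sum_prod_type']
  exact Finset.sum_sq_le_sum_mul_sum_of_sq_le_mul _ (fun e _ => hM e.1 e.2)
    (fun e _ => mul_nonneg (hM e.1 e.2) (sq_nonneg (h e.1 - h e.2))) fun e _ =>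
      (by ring : (M e.1 e.2 * (h e.1 - h e.2)) ^ 2 = _).le

theorem sq_mul_dotProduct_sub_sq_le (hM : ∀ i j, 0 ≤ M i j) (hσ : 0 < totalFlow M)
    (hbal : traffic γ M x = traffic γ Mᵀ y) (h : ι → ℝ) :
    γ ^ 2 * totalFlow M * ((y - x) ⬝ᵥ h) ^ 2 ≤ ∑ i, ∑ j, M i j * (h i - h j) ^ 2 := by
  refine le_of_mul_le_mul_left ?_ hσ
  calc totalFlow M * (γ ^ 2 * totalFlow M * ((y - x) ⬝ᵥ h) ^ 2)
      = (((γ * totalFlow M) • (y - x)) ⬝ᵥ h) ^ 2 := by rw [smul_dotProduct, smul_eq_mul]; ring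
    _ ≤ totalFlow M * ∑ i, ∑ j, M i j * (h i - h j) ^ 2 := by
        rw [← mulVec_one_sub_transpose_mulVec_one hbal, ← sum_flow_eq_dotProduct]
        exact sq_sum_flow_le hM h

theorem dotProduct_scaledJacobian_mulVec (h : ι → ℝ) :
    2 * (h ⬝ᵥ scaledJacobian γ M x y *ᵥ h)
      = 2 * ∑ i, ∑ j, M i j * (h i * h j) + γ ^ 2 * totalFlow M * ((y - x) ⬝ᵥ h) ^ 2
        + γ * totalFlow M * ((x ⬝ᵥ h) ^ 2 + (y ⬝ᵥ h) ^ 2) := by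
  have hM : h ⬝ᵥ M *ᵥ h = ∑ i, ∑ j, M i j * (h i * h j) := by
    simp only [dotProduct, mulVec, Finset.mul_sum]
    exact Finset.sum_congr rfl fun i _ => Finset.sum_congr rfl fun j _ => by ring
  have hMT : h ⬝ᵥ Mᵀ *ᵥ h = h ⬝ᵥ M *ᵥ h := by
    rw [mulVec_transpose, dotProduct_comm, dotProduct_mulVec]
  simp only [scaledJacobian_mulVec, dotProduct_smul, dotProduct_add, hMT, hM, smul_eq_mul,
    dotProduct_comm h x, dotProduct_comm h y, dotProduct_comm h (y - x)]
  ring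

theorem sum_traffic_mul_sq (hbal : traffic γ M x = traffic γ Mᵀ y) (h : ι → ℝ) :
    2 * ∑ k, traffic γ M x k * h k ^ 2
      = ∑ i, ∑ j, M i j * (h i ^ 2 + h j ^ 2)
        + γ * totalFlow M * (∑ k, x k * h k ^ 2 + ∑ k, y k * h k ^ 2) := by
  have hexpand : ∀ (N : Matrix ι ι ℝ) (z : ι → ℝ), ∑ k, traffic γ N z k * h k ^ 2
      = ∑ i, ∑ j, N i j * h i ^ 2 + γ * totalFlow N * ∑ k, z k * h k ^ 2 := fun N z => by
    simp only [traffic, add_mul, Finset.sum_add_distrib, Finset.sum_mul, Finset.mul_sum, mul_assoc]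
  have hin : ∑ k, traffic γ M x k * h k ^ 2
      = ∑ i, ∑ j, M i j * h j ^ 2 + γ * totalFlow M * ∑ k, y k * h k ^ 2 := by
    rw [hbal, hexpand, totalFlow_transpose, Finset.sum_comm]
    simp only [transpose_apply]
  simp only [mul_add, Finset.sum_add_distrib]
  linarith [hexpand M x]

theorem scaledJacobian_mulVec_one (hbal : traffic γ M x = traffic γ Mᵀ y)
    (hx : ∑ k, x k = 1) (hy : ∑ k, y k = 1) :
    scaledJacobian γ M x y *ᵥ 1 = traffic γ M x := by
  funext k
  have hk := congrFun hbal k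
  simp only [traffic, totalFlow_transpose, transpose_apply] at hk
  rw [scaledJacobian_mulVec, dotProduct_one, dotProduct_one, dotProduct_one]
  simp only [Pi.sub_apply, Finset.sum_sub_distrib, hx, hy, sub_self, mul_zero, zero_smul, add_zero,
    one_smul, Pi.add_apply, Pi.smul_apply, mulVec, dotProduct_one, transpose_apply, smul_eq_mul,
    traffic]
  linarith

variable [DecidableEq ι]

theorem dotProduct_diagonal_mulVec (d h : ι → ℝ) :
    h ⬝ᵥ diagonal d *ᵥ h = ∑ k, d k * h k ^ 2 := by
  simp only [dotProduct, mulVec_diagonal]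
  exact Finset.sum_congr rfl fun k _ => by ring

theorem variance_le_dotProduct_diagonal_sub (hM : ∀ i j, 0 ≤ M i j) (hσ : 0 < totalFlow M)
    (hbal : traffic γ M x = traffic γ Mᵀ y) (hx₁ : ∑ k, x k = 1) (hy₁ : ∑ k, y k = 1)
    (h : ι → ℝ) :
    γ * totalFlow M * (∑ k, x k * (h k - x ⬝ᵥ h) ^ 2 + ∑ k, y k * (h k - y ⬝ᵥ h) ^ 2)
      ≤ 2 * (h ⬝ᵥ (diagonal (traffic γ M x) - scaledJacobian γ M x y) *ᵥ h) := by
  have hflow : ∑ i, ∑ j, M i j * (h i - h j) ^ 2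
      = ∑ i, ∑ j, M i j * (h i ^ 2 + h j ^ 2) - 2 * ∑ i, ∑ j, M i j * (h i * h j) := by
    simp only [Finset.mul_sum, ← Finset.sum_sub_distrib]
    exact Finset.sum_congr rfl fun i _ => Finset.sum_congr rfl fun j _ => by ring
  rw [sum_mul_sub_mean_sq x h hx₁, sum_mul_sub_mean_sq y h hy₁, sub_mulVec, dotProduct_sub,
    dotProduct_diagonal_mulVec]
  linarith [dotProduct_scaledJacobian_mulVec (γ := γ) (M := M) (x := x) (y := y) h,
    sum_traffic_mul_sq hbal h, sq_mul_dotProduct_sub_sq_le hM hσ hbal h]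

theorem posSemidef_diagonal_sub_scaledJacobian (hM : ∀ i j, 0 ≤ M i j) (hγ : 0 ≤ γ)
    (hσ : 0 < totalFlow M) (hbal : traffic γ M x = traffic γ Mᵀ y) (hx : x ∈ stdSimplex ℝ ι)
    (hy : y ∈ stdSimplex ℝ ι) :
    (diagonal (traffic γ M x) - scaledJacobian γ M x y).PosSemidef := by
  refine .of_dotProduct_mulVec_nonneg
    ((isHermitian_diagonal _).sub isHermitian_scaledJacobian) fun h => ?_
  have hvar := variance_le_dotProduct_diagonal_sub hM hσ hbal hx.2 hy.2 h
  have hvar₀ : 0 ≤ ∑ k, x k * (h k - x ⬝ᵥ h) ^ 2 + ∑ k, y k * (h k - y ⬝ᵥ h) ^ 2 :=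
    add_nonneg (Finset.sum_nonneg fun k _ => mul_nonneg (hx.1 k) (sq_nonneg _))
      (Finset.sum_nonneg fun k _ => mul_nonneg (hy.1 k) (sq_nonneg _))
  rw [star_trivial]
  linarith [mul_nonneg (mul_nonneg hγ hσ.le) hvar₀]

theorem smul_one_eq_of_diagonal_sub_scaledJacobian_mulVec_eq_zero (hM : ∀ i j, 0 ≤ M i j)
    (hγ : 0 < γ) (hσ : 0 < totalFlow M) (hbal : traffic γ M x = traffic γ Mᵀ y)
    (hx₀ : ∀ k, 0 < x k) (hx₁ : ∑ k, x k = 1) (hy : y ∈ stdSimplex ℝ ι) {h : ι → ℝ}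
    (hker : (diagonal (traffic γ M x) - scaledJacobian γ M x y) *ᵥ h = 0) :
    (x ⬝ᵥ h) • 1 = h := by
  have hvar := variance_le_dotProduct_diagonal_sub hM hσ hbal hx₁ hy.2 h
  rw [hker, dotProduct_zero, mul_zero] at hvar
  have hterm : ∀ k ∈ Finset.univ, 0 ≤ x k * (h k - x ⬝ᵥ h) ^ 2 :=
    fun k _ => mul_nonneg (hx₀ k).le (sq_nonneg _)
  have hy₀ : 0 ≤ ∑ k, y k * (h k - y ⬝ᵥ h) ^ 2 :=
    Finset.sum_nonneg fun k _ => mul_nonneg (hy.1 k) (sq_nonneg _)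
  have hzero : ∑ k, x k * (h k - x ⬝ᵥ h) ^ 2 = 0 := by
    refine le_antisymm ?_ (Finset.sum_nonneg hterm)
    linarith [nonpos_of_mul_nonpos_right hvar (mul_pos hγ hσ)]
  funext k
  have hk := (Finset.sum_eq_zero_iff_of_nonneg hterm).1 hzero k (Finset.mem_univ k)
  rw [Pi.smul_apply, Pi.one_apply, smul_eq_mul, mul_one]
  exact (sub_eq_zero.1 <| (pow_eq_zero_iff two_ne_zero).1 <|
    (mul_eq_zero.1 hk).resolve_left (hx₀ k).ne').symm

theorem posDef_diagonal_add_scaledJacobian (hM : ∀ i j, 0 ≤ M i j) (hγ : 0 < γ)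
    (hσ : 0 < totalFlow M) (hbal : traffic γ M x = traffic γ Mᵀ y) (hx₀ : ∀ k, 0 < x k)
    (hy₀ : 0 ≤ y) : (diagonal (traffic γ M x) + scaledJacobian γ M x y).PosDef := by
  refine .of_dotProduct_mulVec_pos ((isHermitian_diagonal _).add isHermitian_scaledJacobian)
    fun h hh => ?_
  have hflow : ∑ i, ∑ j, M i j * (h i + h j) ^ 2
      = ∑ i, ∑ j, M i j * (h i ^ 2 + h j ^ 2) + 2 * ∑ i, ∑ j, M i j * (h i * h j) := by
    simp only [Finset.mul_sum, ← Finset.sum_add_distrib]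
    exact Finset.sum_congr rfl fun i _ => Finset.sum_congr rfl fun j _ => by ring
  have hflow₀ : 0 ≤ ∑ i, ∑ j, M i j * (h i + h j) ^ 2 :=
    Finset.sum_nonneg fun i _ => Finset.sum_nonneg fun j _ => mul_nonneg (hM i j) (sq_nonneg _)
  have hx : 0 < ∑ k, x k * h k ^ 2 := by
    rw [← dotProduct_diagonal_mulVec]
    exact (PosDef.diagonal hx₀).dotProduct_mulVec_pos hh
  have hy : 0 ≤ ∑ k, y k * h k ^ 2 :=
    Finset.sum_nonneg fun k _ => mul_nonneg (hy₀ k) (sq_nonneg _)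
  have hγσ : 0 < γ * totalFlow M * (∑ k, x k * h k ^ 2 + ∑ k, y k * h k ^ 2) :=
    mul_pos (mul_pos hγ hσ) (add_pos_of_pos_of_nonneg hx hy)
  have hrank₁ : 0 ≤ γ ^ 2 * totalFlow M * ((y - x) ⬝ᵥ h) ^ 2 := by positivity
  have hrank₂ : 0 ≤ γ * totalFlow M * ((x ⬝ᵥ h) ^ 2 + (y ⬝ᵥ h) ^ 2) := by positivity
  rw [star_trivial, add_mulVec, dotProduct_add, dotProduct_diagonal_mulVec]
  linarith [dotProduct_scaledJacobian_mulVec (γ := γ) (M := M) (x := x) (y := y) h,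
    sum_traffic_mul_sq hbal h]

theorem mulVec_one_of_diagonal_mul_eq_scaledJacobian {J : Matrix ι ι ℝ}
    (hJ : diagonal (traffic γ M x) * J = scaledJacobian γ M x y)
    (hd : ∀ k, traffic γ M x k ≠ 0) (hbal : traffic γ M x = traffic γ Mᵀ y)
    (hx : ∑ k, x k = 1) (hy : ∑ k, y k = 1) : J *ᵥ 1 = 1 := by
  funext k
  have hk := congrFun (scaledJacobian_mulVec_one hbal hx hy) k
  rw [← hJ, ← mulVec_mulVec, mulVec_diagonal] at hk
  exact (mul_eq_left₀ (hd k)).1 hk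

theorem rootMultiplicity_one_charpoly_of_diagonal_mul_eq_scaledJacobian [Nonempty ι]
    {J : Matrix ι ι ℝ} (hJ : diagonal (traffic γ M x) * J = scaledJacobian γ M x y)
    (hM : ∀ i j, 0 ≤ M i j) (hγ : 0 < γ) (hσ : 0 < totalFlow M)
    (hbal : traffic γ M x = traffic γ Mᵀ y) (hx₀ : ∀ k, 0 < x k) (hx₁ : ∑ k, x k = 1)
    (hy : y ∈ stdSimplex ℝ ι) : J.charpoly.rootMultiplicity 1 = 1 := by
  have hd : ∀ k, 0 < traffic γ M x k := traffic_pos hM hγ hσ hx₀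
  refine rootMultiplicity_one_charpoly_eq_one (.diagonal hd) (hJ ▸ isHermitian_scaledJacobian)
    one_ne_zero (mulVec_one_of_diagonal_mul_eq_scaledJacobian hJ (fun k => (hd k).ne') hbal hx₁
      hy.2) fun w hw => ⟨x ⬝ᵥ w, ?_⟩
  have hker : (diagonal (traffic γ M x) - scaledJacobian γ M x y) *ᵥ w = 0 := by
    rw [← hJ, sub_mulVec, ← mulVec_mulVec, hw, sub_self]
  exact smul_one_eq_of_diagonal_sub_scaledJacobian_mulVec_eq_zero hM hγ hσ hbal hx₀ hx₁ hy hker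

end Traffic

section HotsMap

variable {ι : Type*} {γ : ℝ} {A : Matrix ι ι ℝ}

/-- The flow `A i j * exp (p i - p j)` along the arcs induced by the potential `p`. -/
noncomputable def hotsFlow (A : Matrix ι ι ℝ) (p : ι → ℝ) : Matrix ι ι ℝ :=
  of fun i j => A i j * Real.exp (p i - p j)

theorem hotsFlow_nonneg (hA : ∀ i j, 0 ≤ A i j) (p : ι → ℝ) (i j : ι) : 0 ≤ hotsFlow A p i j :=
  mul_nonneg (hA i j) (Real.exp_pos _).le

theorem hotsFlow_transpose_neg (A : Matrix ι ι ℝ) (p : ι → ℝ) :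
    hotsFlow Aᵀ (-p) = (hotsFlow A p)ᵀ := by
  ext i j
  simp only [hotsFlow, of_apply, transpose_apply, Pi.neg_apply, neg_sub_neg]

theorem mul_exp_eq_exp_mul_hotsFlow (A : Matrix ι ι ℝ) (p : ι → ℝ) (i k : ι) :
    A i k * Real.exp (p i) = Real.exp (p k) * hotsFlow A p i k := by
  rw [hotsFlow, of_apply, Real.exp_sub, mul_left_comm, mul_div_cancel₀ _ (Real.exp_pos (p k)).ne']

variable [Fintype ι]

/-- The Gibbs distribution (softmax) with weights proportional to `exp (p k)`. -/
noncomputable def gibbs (p : ι → ℝ) : ι → ℝ :=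
  fun k => Real.exp (p k) / ∑ i, Real.exp (p i)

/-- The argument of the first logarithm in the HOTS map. Reversing all arcs and negating the
potential turns it into the argument of the second one, so only this half is encoded. -/
noncomputable def hotsNumerator (γ : ℝ) (A : Matrix ι ι ℝ) (p : ι → ℝ) (k : ι) : ℝ :=
  ∑ i, A i k * Real.exp (p i) + γ * totalFlow (hotsFlow A p) / ∑ j, Real.exp (-(p j))

/-- The effective HOTS map with `γ` as a free parameter. -/
noncomputable def hotsMap (γ : ℝ) (A : Matrix ι ι ℝ) (p : ι → ℝ) : ι → ℝ :=
  fun k => 1 / 2 * Real.log (hotsNumerator γ A p k)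
    - 1 / 2 * Real.log (hotsNumerator γ Aᵀ (-p) k)

/-- The matrix whose `k`-th row, multiplied by `exp (p k)`, is the gradient of the `k`-th HOTS
numerator at `p`, when `M` is the flow of `p` and `y` is the Gibbs distribution of `-p`. -/
noncomputable def inflowGradient (γ : ℝ) (M : Matrix ι ι ℝ) (y : ι → ℝ) : Matrix ι ι ℝ :=
  Mᵀ + γ • vecMulVec y (M *ᵥ 1 - Mᵀ *ᵥ 1 + totalFlow M • y)

theorem sum_exp_pos (p : ι → ℝ) (k : ι) : 0 < ∑ i, Real.exp (p i) :=
  Finset.sum_pos (fun i _ => Real.exp_pos (p i)) ⟨k, Finset.mem_univ k⟩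

theorem gibbs_pos (p : ι → ℝ) (k : ι) : 0 < gibbs p k :=
  div_pos (Real.exp_pos (p k)) (sum_exp_pos p k)

theorem sum_gibbs [Nonempty ι] (p : ι → ℝ) : ∑ k, gibbs p k = 1 := by
  simp only [gibbs, ← Finset.sum_div]
  exact div_self (sum_exp_pos p (Classical.arbitrary ι)).ne'

theorem gibbs_mem_stdSimplex [Nonempty ι] (p : ι → ℝ) : gibbs p ∈ stdSimplex ℝ ι :=
  ⟨fun k => (gibbs_pos p k).le, sum_gibbs p⟩

theorem totalFlow_hotsFlow_pos (hA : ∀ i j, 0 ≤ A i j) (hA₀ : A ≠ 0) (p : ι → ℝ) :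
    0 < totalFlow (hotsFlow A p) := by
  obtain ⟨i, j, hij⟩ : ∃ i j, A i j ≠ 0 := by
    by_contra! h
    exact hA₀ (ext h)
  have hrow : ∀ i ∈ Finset.univ, 0 ≤ ∑ j, hotsFlow A p i j :=
    fun i _ => Finset.sum_nonneg fun j _ => hotsFlow_nonneg hA p i j
  refine Finset.sum_pos' hrow ⟨i, Finset.mem_univ i, Finset.sum_pos'
    (fun j _ => hotsFlow_nonneg hA p i j) ⟨j, Finset.mem_univ j, ?_⟩⟩
  exact mul_pos ((hA i j).lt_of_ne' hij) (Real.exp_pos _)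

theorem inv_sum_exp_neg_eq_exp_mul_gibbs (p : ι → ℝ) (k : ι) :
    (∑ j, Real.exp (-(p j)))⁻¹ = Real.exp (p k) * gibbs (-p) k := by
  rw [gibbs, ← mul_div_assoc, Pi.neg_apply, ← Real.exp_add, add_neg_cancel, Real.exp_zero, one_div]
  rfl

theorem hotsNumerator_eq_exp_mul_traffic (γ : ℝ) (A : Matrix ι ι ℝ) (p : ι → ℝ) (k : ι) :
    hotsNumerator γ A p k = Real.exp (p k) * traffic γ (hotsFlow A p)ᵀ (gibbs (-p)) k := by
  rw [hotsNumerator, traffic, div_eq_mul_inv, inv_sum_exp_neg_eq_exp_mul_gibbs p k,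
    totalFlow_transpose, mul_left_comm, mul_add, Finset.mul_sum]
  simp only [mul_exp_eq_exp_mul_hotsFlow, transpose_apply]

theorem hasFDerivAt_totalFlow_hotsFlow (A : Matrix ι ι ℝ) (p : ι → ℝ) :
    HasFDerivAt (fun q => totalFlow (hotsFlow A q))
      (∑ i, ∑ j, hotsFlow A p i j • (.proj i - .proj j : (ι → ℝ) →L[ℝ] ℝ)) p := by
  refine .fun_sum fun i _ => .fun_sum fun j _ => ?_
  refine (((hasFDerivAt_apply i p).fun_sub (hasFDerivAt_apply j p)).exp.const_mul
    (A i j)).congr_fderiv ?_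
  rw [smul_smul]
  rfl

theorem inflowGradient_mulVec (M : Matrix ι ι ℝ) (y h : ι → ℝ) :
    inflowGradient γ M y *ᵥ h
      = Mᵀ *ᵥ h + (γ * (∑ i, ∑ j, M i j * (h i - h j) + totalFlow M * (y ⬝ᵥ h))) • y := by
  rw [inflowGradient, add_mulVec, smul_mulVec, vecMulVec_mulVec, op_smul_eq_smul, add_dotProduct,
    smul_dotProduct, ← sum_flow_eq_dotProduct, smul_smul, smul_eq_mul]

theorem inflowGradient_add_inflowGradient_transpose {M : Matrix ι ι ℝ} {x y : ι → ℝ}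
    (hbal : traffic γ M x = traffic γ Mᵀ y) :
    inflowGradient γ M y + inflowGradient γ Mᵀ x = (2 : ℝ) • scaledJacobian γ M x y := by
  have hflow := mulVec_one_sub_transpose_mulVec_one hbal
  have hflow' : Mᵀ *ᵥ 1 - M *ᵥ 1 = (γ * totalFlow M) • (x - y) := by
    rw [← neg_sub, hflow, ← smul_neg, neg_sub]
  rw [inflowGradient, inflowGradient, transpose_transpose, totalFlow_transpose, hflow, hflow']
  ext i j
  simp only [scaledJacobian, Matrix.add_apply, Matrix.smul_apply, vecMulVec_apply, transpose_apply,
    Pi.add_apply, Pi.sub_apply, Pi.smul_apply, smul_eq_mul]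
  ring

theorem hasFDerivAt_inv_sum_exp_neg [Nonempty ι] (p : ι → ℝ) :
    HasFDerivAt (fun q : ι → ℝ => (∑ j, Real.exp (-(q j)))⁻¹)
      ((∑ j, Real.exp (-(p j)))⁻¹ •
        ∑ j, gibbs (-p) j • ContinuousLinearMap.proj (R := ℝ) (φ := fun _ : ι => ℝ) j) p := by
  have hpartition : HasFDerivAt (fun q : ι → ℝ => ∑ j, Real.exp (-(q j)))
      (∑ j, Real.exp (-(p j)) • -ContinuousLinearMap.proj (R := ℝ) (φ := fun _ : ι => ℝ) j) p :=
    .fun_sum fun j _ => (hasFDerivAt_apply j p).fun_neg.exp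
  have hZ : ∑ j, Real.exp (-(p j)) ≠ 0 := (sum_exp_pos (-p) (Classical.arbitrary ι)).ne'
  refine ((hasDerivAt_inv hZ).comp_hasFDerivAt p hpartition).congr_fderiv ?_
  simp only [Finset.smul_sum, smul_smul, smul_neg, ← neg_smul]
  refine Finset.sum_congr rfl fun j _ => congrArg (· • _) ?_
  simp only [gibbs, Pi.neg_apply]
  ring

theorem hasFDerivAt_hotsNumerator (γ : ℝ) (A : Matrix ι ι ℝ) (p : ι → ℝ) (k : ι) :
    HasFDerivAt (fun q => hotsNumerator γ A q k)
      (Real.exp (p k) • (ContinuousLinearMap.proj k).comp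
        (inflowGradient γ (hotsFlow A p) (gibbs (-p))).mulVecLin.toContinuousLinearMap) p := by
  have : Nonempty ι := ⟨k⟩
  have hin : HasFDerivAt (fun q : ι → ℝ => ∑ i, A i k * Real.exp (q i))
      (∑ i, A i k • Real.exp (p i) • ContinuousLinearMap.proj (R := ℝ) (φ := fun _ : ι => ℝ) i) p :=
    .fun_sum fun i _ => (hasFDerivAt_apply i p).exp.const_mul (A i k)
  refine (hin.add (((hasFDerivAt_totalFlow_hotsFlow A p).const_mul γ).mul
    (hasFDerivAt_inv_sum_exp_neg p))).congr_fderiv (ContinuousLinearMap.ext fun h => ?_)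
  have hrow : ∑ i, A i k * (Real.exp (p i) * h i)
      = Real.exp (p k) * ((hotsFlow A p)ᵀ *ᵥ h) k := by
    simp only [mulVec, dotProduct, transpose_apply, Finset.mul_sum, ← mul_assoc,
      mul_exp_eq_exp_mul_hotsFlow]
  have hmean : ∑ i, gibbs (-p) i * h i = gibbs (-p) ⬝ᵥ h := rfl
  simp only [inv_sum_exp_neg_eq_exp_mul_gibbs p k, _root_.add_apply, _root_.sum_apply,
    _root_.smul_apply, _root_.sub_apply, ContinuousLinearMap.proj_apply,
    ContinuousLinearMap.comp_apply, LinearMap.coe_toContinuousLinearMap', mulVecLin_apply,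
    inflowGradient_mulVec, hrow, hmean, Pi.add_apply, Pi.smul_apply, smul_eq_mul]
  ring

theorem hasFDerivAt_log_hotsNumerator {p : ι → ℝ} {k : ι}
    (hd : traffic γ (hotsFlow A p)ᵀ (gibbs (-p)) k ≠ 0) :
    HasFDerivAt (fun q => Real.log (hotsNumerator γ A q k))
      ((traffic γ (hotsFlow A p)ᵀ (gibbs (-p)) k)⁻¹ • (ContinuousLinearMap.proj k).comp
        (inflowGradient γ (hotsFlow A p) (gibbs (-p))).mulVecLin.toContinuousLinearMap) p := by
  have hexp := (Real.exp_pos (p k)).ne'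
  have hN : hotsNumerator γ A p k ≠ 0 := by
    rw [hotsNumerator_eq_exp_mul_traffic]
    exact mul_ne_zero hexp hd
  refine ((hasFDerivAt_hotsNumerator γ A p k).log hN).congr_fderiv ?_
  rw [hotsNumerator_eq_exp_mul_traffic, smul_smul, _root_.mul_inv_rev, inv_mul_cancel_right₀ hexp]

theorem hotsMap_apply_eq_add_log_traffic {p : ι → ℝ} {k : ι}
    (hin : traffic γ (hotsFlow A p)ᵀ (gibbs (-p)) k ≠ 0)
    (hout : traffic γ (hotsFlow A p) (gibbs p) k ≠ 0) :
    hotsMap γ A p k = p k + 1 / 2 * (Real.log (traffic γ (hotsFlow A p)ᵀ (gibbs (-p)) k)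
      - Real.log (traffic γ (hotsFlow A p) (gibbs p) k)) := by
  rw [hotsMap, hotsNumerator_eq_exp_mul_traffic, hotsNumerator_eq_exp_mul_traffic,
    hotsFlow_transpose_neg, transpose_transpose, neg_neg, Real.log_mul (Real.exp_pos _).ne' hin,
    Real.log_mul (Real.exp_pos _).ne' hout, Real.log_exp, Real.log_exp, Pi.neg_apply]
  ring

theorem traffic_gibbs_eq_of_hotsMap_eq {p : ι → ℝ}
    (hin : ∀ k, 0 < traffic γ (hotsFlow A p)ᵀ (gibbs (-p)) k)
    (hout : ∀ k, 0 < traffic γ (hotsFlow A p) (gibbs p) k) (hfix : hotsMap γ A p = p) :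
    traffic γ (hotsFlow A p) (gibbs p) = traffic γ (hotsFlow A p)ᵀ (gibbs (-p)) := by
  funext k
  have hk := congrFun hfix k
  rw [hotsMap_apply_eq_add_log_traffic (hin k).ne' (hout k).ne'] at hk
  exact Real.log_injOn_pos (hout k) (hin k) (by linarith)

theorem hasFDerivAt_hotsMap [DecidableEq ι] {p : ι → ℝ}
    (hd : ∀ k, traffic γ (hotsFlow A p) (gibbs p) k ≠ 0)
    (hbal : traffic γ (hotsFlow A p) (gibbs p) = traffic γ (hotsFlow A p)ᵀ (gibbs (-p))) :
    HasFDerivAt (hotsMap γ A) (diagonal (traffic γ (hotsFlow A p) (gibbs p))⁻¹ *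
      scaledJacobian γ (hotsFlow A p) (gibbs p) (gibbs (-p))).mulVecLin.toContinuousLinearMap
      p := by
  refine hasFDerivAt_pi'.2 fun k => ?_
  have hnum := hasFDerivAt_log_hotsNumerator (γ := γ) (A := A) (p := p) (k := k)
    (by rw [← hbal]; exact hd k)
  have hden := hasFDerivAt_log_hotsNumerator (γ := γ) (A := Aᵀ) (p := -p) (k := k)
    (by rw [hotsFlow_transpose_neg, transpose_transpose, neg_neg]; exact hd k)
  rw [hotsFlow_transpose_neg, transpose_transpose, neg_neg] at hden
  refine ((hnum.const_mul (1 / 2)).sub ((hden.comp p (hasFDerivAt_id p).neg).const_mul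
    (1 / 2))).congr_fderiv (ContinuousLinearMap.ext fun h => ?_)
  have hsum := congrFun (congrArg (· *ᵥ h) (inflowGradient_add_inflowGradient_transpose hbal)) k
  simp only [add_mulVec, smul_mulVec, Pi.add_apply, Pi.smul_apply, smul_eq_mul] at hsum
  simp only [← hbal, ContinuousLinearMap.comp_neg, ContinuousLinearMap.comp_id, smul_neg,
    sub_neg_eq_add, _root_.add_apply, _root_.smul_apply, ContinuousLinearMap.comp_apply,
    LinearMap.coe_toContinuousLinearMap', ContinuousLinearMap.proj_apply, smul_eq_mul,
    mulVecLin_apply, ← mulVec_mulVec, mulVec_diagonal, Pi.inv_apply]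
  linear_combination 1 / 2 * (traffic γ (hotsFlow A p) (gibbs p) k)⁻¹ * hsum

theorem diagonal_mul_eq_scaledJacobian_of_hasFDerivAt [DecidableEq ι] {p : ι → ℝ}
    (hd : ∀ k, traffic γ (hotsFlow A p) (gibbs p) k ≠ 0)
    (hbal : traffic γ (hotsFlow A p) (gibbs p) = traffic γ (hotsFlow A p)ᵀ (gibbs (-p)))
    {f' : (ι → ℝ) →L[ℝ] (ι → ℝ)} (hf' : HasFDerivAt (hotsMap γ A) f' p) {J : Matrix ι ι ℝ}
    (hJ : ∀ h, f' h = J *ᵥ h) :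
    diagonal (traffic γ (hotsFlow A p) (gibbs p)) * J
      = scaledJacobian γ (hotsFlow A p) (gibbs p) (gibbs (-p)) := by
  have hJ_eq : J = diagonal (traffic γ (hotsFlow A p) (gibbs p))⁻¹
      * scaledJacobian γ (hotsFlow A p) (gibbs p) (gibbs (-p)) := mulVec_injective <| by
    funext h
    rw [← hJ, hf'.unique (hasFDerivAt_hotsMap hd hbal)]
    rfl
  have hinv : diagonal (traffic γ (hotsFlow A p) (gibbs p))
      * diagonal (traffic γ (hotsFlow A p) (gibbs p))⁻¹ = 1 := by
    rw [diagonal_mul_diagonal, ← diagonal_one]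
    exact congrArg diagonal (funext fun k => mul_inv_cancel₀ (hd k))
  rw [hJ_eq, ← Matrix.mul_assoc, hinv, Matrix.one_mul]

theorem effHotsMap_eq_hotsMap {n : ℕ} (A : Matrix (Fin n) (Fin n) ℝ) (α : ℝ) :
    effHotsMap A α = hotsMap ((1 - α) / (2 * α - 1)) A := by
  have hσ : ∀ p, totalFlow (hotsFlow A p) = sigmaFun A p := fun _ => rfl
  funext p k
  simp only [effHotsMap, hotsMap, hotsNumerator, hotsFlow_transpose_neg, totalFlow_transpose, hσ,
    transpose_apply, Pi.neg_apply, neg_neg]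

end HotsMap

/-- At a fixed point `p*` of `F`, `F` is differentiable, every complex eigenvalue of the
Jacobian `∇F(p*)` is real and lies in `(−1, 1]`, and `1` is a simple eigenvalue with
eigenvector the all-ones vector. -/
theorem effHotsMap_jacobian_spectrum {n : ℕ} (A : Matrix (Fin n) (Fin n) ℝ)
    (hA : ∀ i j, 0 ≤ A i j) (hA0 : A ≠ 0) (α : ℝ) (hα₁ : 1 / 2 < α) (hα₂ : α < 1)
    (pstar : Fin n → ℝ) (hfix : effHotsMap A α pstar = pstar) :
    DifferentiableAt ℝ (effHotsMap A α) pstar ∧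
    ∀ (f' : (Fin n → ℝ) →L[ℝ] (Fin n → ℝ)), HasFDerivAt (effHotsMap A α) f' pstar →
      ∀ J : Matrix (Fin n) (Fin n) ℝ, (∀ x, f' x = J.mulVec x) →
        (∀ μ : ℂ, μ ∈ spectrum ℂ (J.map (Complex.ofReal)) →
          μ.im = 0 ∧ -1 < μ.re ∧ μ.re ≤ 1) ∧
        (J.map (Complex.ofReal)).charpoly.rootMultiplicity 1 = 1 ∧
        J.mulVec (fun _ => (1 : ℝ)) = fun _ => 1 := by
  rw [effHotsMap_eq_hotsMap] at hfix ⊢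
  set γ := (1 - α) / (2 * α - 1)
  have hγ : 0 < γ := div_pos (by linarith) (by linarith)
  have : Nonempty (Fin n) := not_isEmpty_iff.1 fun _ => hA0 (Subsingleton.elim A 0)
  set M := hotsFlow A pstar
  set x := gibbs pstar
  set y := gibbs (-pstar)
  have hM : ∀ i j, 0 ≤ M i j := hotsFlow_nonneg hA pstar
  have hσ : 0 < totalFlow M := totalFlow_hotsFlow_pos hA hA0 pstar
  have hx : x ∈ stdSimplex ℝ (Fin n) := gibbs_mem_stdSimplex pstar
  have hy : y ∈ stdSimplex ℝ (Fin n) := gibbs_mem_stdSimplex (-pstar)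
  have hd : ∀ k, 0 < traffic γ M x k := traffic_pos hM hγ hσ (gibbs_pos pstar)
  have hbal : traffic γ M x = traffic γ Mᵀ y := traffic_gibbs_eq_of_hotsMap_eq
    (traffic_pos (fun i j => hM j i) hγ (totalFlow_transpose M ▸ hσ) (gibbs_pos (-pstar))) hd hfix
  have hderiv := hasFDerivAt_hotsMap (fun k => (hd k).ne') hbal
  refine ⟨hderiv.differentiableAt, fun f' hf' J hfJ => ?_⟩
  have hJ := diagonal_mul_eq_scaledJacobian_of_hasFDerivAt (fun k => (hd k).ne') hbal hf' hfJ
  refine ⟨fun μ hμ => im_eq_zero_and_re_mem_of_mem_spectrum (PosDef.diagonal hd) ?_ ?_ hμ, ?_,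
    mulVec_one_of_diagonal_mul_eq_scaledJacobian hJ (fun k => (hd k).ne') hbal hx.2 hy.2⟩
  · exact hJ ▸ posSemidef_diagonal_sub_scaledJacobian hM hγ.le hσ hbal hx hy
  · exact hJ ▸ posDef_diagonal_add_scaledJacobian hM hγ hσ hbal (gibbs_pos pstar) hy.1
  · rw [← Complex.ofReal_one, rootMultiplicity_charpoly_map_ofReal]
    exact rootMultiplicity_one_charpoly_of_diagonal_mul_eq_scaledJacobian hJ hM hγ hσ hbal
      (gibbs_pos pstar) hx.2 hy
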